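/- Let S be a commutative ring, let C and C' be non-negatively graded chain complexes of S-modules, and let f : C → C' be a quasi-isomorphism (i.e. f induces an isomorphism on homology in every degree). Let D be a non-negatively graded chain complex of S-modules such that every term D_n is a projective S-module and D_n = 0 for all n greater than some bound N. Then the induced map f ⊗ id_D from the total complex of C ⊗ D to the total complex of C' ⊗ D is a quasi-isomorphism. -/

import Mathlib

open CategoryTheory MonoidalCategory Limits

/- The monoidal (tensor product) structure on `ℕ`-indexed chain complexes of `S`-modules:
we provide the instances needed for Mathlib's monoidal structure on homological complexes. -/

noncomputable instance (S : Type) [CommRing S] : (curriedTensor (ModuleCat S)).Additive where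
  map_add := by intros; ext; simp [curriedTensor, MonoidalPreadditive.add_whiskerRight]

instance (S : Type) [CommRing S] (X : ModuleCat S) :
    ((curriedTensor (ModuleCat S)).obj X).Additive where
  map_add := by intros; simp [curriedTensor, MonoidalPreadditive.whiskerLeft_add]

noncomputable instance (S : Type) [CommRing S] (X : ModuleCat S) :
    PreservesColimits ((curriedTensor (ModuleCat S)).obj X) :=
  inferInstanceAs (PreservesColimits (tensorLeft X))

noncomputable instance (S : Type) [CommRing S] (X : ModuleCat S) :
    PreservesColimits ((curriedTensor (ModuleCat S)).flip.obj X) :=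
  preservesColimits_of_natIso (F := tensorLeft X)
    (NatIso.ofComponents (fun Y => β_ X Y) (by intros; simp [tensorLeft, tensorRight]))

/-- Elementwise acyclicity of the mapping cone. -/
def ConeAcyc {S : Type} [CommRing S] {C C' : ChainComplex (ModuleCat.{0} S) ℕ} (f : C ⟶ C') : Prop :=
  ∀ (n : ℕ) (x : C.X (n - 1)) (y : C'.X n), (n = 0 → x = 0) → (∀ k, C.d (n - 1) k x = 0) →
    f.f (n - 1) x = C'.d n (n - 1) y →
    ∃ (z : C.X n) (w : C'.X (n + 1)), C.d n (n - 1) z = x ∧ f.f n z = y + C'.d (n + 1) n w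

lemma downNat_next (n : ℕ) : (ComplexShape.down ℕ).next n = n - 1 := by
  cases n with
  | zero => simp
  | succ n => simp

lemma down_d_zero {S : Type} [CommRing S] (C : ChainComplex (ModuleCat.{0} S) ℕ) {n m : ℕ}
    (h : m + 1 ≠ n) : C.d n m = 0 := C.shape _ _ h

lemma d_d_apply {S : Type} [CommRing S] (C : ChainComplex (ModuleCat.{0} S) ℕ) (i j k : ℕ)
    (x : C.X i) : C.d j k (C.d i j x) = 0 := by
  rw [← ConcreteCategory.comp_apply, C.d_comp_d]; rfl

lemma f_d_apply {S : Type} [CommRing S] {C C' : ChainComplex (ModuleCat.{0} S) ℕ} (f : C ⟶ C')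
    (i j : ℕ) (x : C.X i) : f.f j (C.d i j x) = C'.d i j (f.f i x) := by
  rw [← ConcreteCategory.comp_apply, ← ConcreteCategory.comp_apply, f.comm]

/-- the map from `S` defined by an element -/
noncomputable def elt {S : Type} [CommRing S] {X : ModuleCat.{0} S} (x : X) : ModuleCat.of S S ⟶ X :=
  ModuleCat.ofHom (LinearMap.toSpanSingleton S X x)

lemma elt_comp {S : Type} [CommRing S] {X Y : ModuleCat.{0} S} (x : X) (g : X ⟶ Y) :
    elt x ≫ g = elt (g x) := by
  ext; simp [elt]

lemma elt_zero {S : Type} [CommRing S] {X : ModuleCat.{0} S} : elt (0 : X) = 0 := by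
  ext; simp [elt]

lemma elt_one {S : Type} [CommRing S] {X : ModuleCat.{0} S} (x : X) : elt x (1 : S) = x := by
  simp [elt]

lemma mono_elt {S : Type} [CommRing S] {C C' : ChainComplex (ModuleCat.{0} S) ℕ} (f : C ⟶ C') (n : ℕ)
    (h : Mono (HomologicalComplex.homologyMap f n)) (x : C.X n) (hx : C.d n (n-1) x = 0)
    (y : C'.X (n+1)) (hy : f.f n x = C'.d (n+1) n y) : ∃ z, C.d (n+1) n z = x := by
  rw [HomologicalComplex.mono_homologyMap_iff_up_to_refinements f (n+1) n (n-1) (by simp)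
    (downNat_next n)] at h
  obtain ⟨A, p, hp, x₁, h₁⟩ := h (elt x) (by rw [elt_comp, hx, elt_zero]) (elt y)
    (by rw [elt_comp, elt_comp, hy])
  obtain ⟨a, ha⟩ := (ModuleCat.epi_iff_surjective p).1 hp (1 : S)
  refine ⟨x₁ a, ?_⟩
  rw [← ConcreteCategory.comp_apply, ← h₁, ConcreteCategory.comp_apply, ha, elt_one]

lemma epi_elt {S : Type} [CommRing S] {C C' : ChainComplex (ModuleCat.{0} S) ℕ} (f : C ⟶ C') (n : ℕ)
    (h : Epi (HomologicalComplex.homologyMap f n)) (y : C'.X n) (hy : C'.d n (n-1) y = 0) :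
    ∃ z w, C.d n (n-1) z = 0 ∧ y = f.f n z + C'.d (n+1) n w := by
  rw [HomologicalComplex.epi_homologyMap_iff_up_to_refinements f (n+1) n (n-1) (by simp)
    (downNat_next n)] at h
  obtain ⟨A, p, hp, x₂, h₂, y₁, h₁⟩ := h (elt y) (by rw [elt_comp, hy, elt_zero])
  obtain ⟨a, ha⟩ := (ModuleCat.epi_iff_surjective p).1 hp (1 : S)
  refine ⟨x₂ a, y₁ a, ?_, ?_⟩
  · rw [← ConcreteCategory.comp_apply, h₂]; rfl
  · have := congrArg (fun g => g a) (congrArg (fun g => g.hom) h₁)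
    simpa [ha, elt_one, -ConcreteCategory.hom_ofHom, elt] using this

lemma coneAcyc_of_quasiIso {S : Type} [CommRing S] {C C' : ChainComplex (ModuleCat.{0} S) ℕ}
    (f : C ⟶ C') (hf : QuasiIso f) : ConeAcyc f := by
  intro n x y hx0 hx hy
  have hh : ∀ n, IsIso (HomologicalComplex.homologyMap f n) := fun n =>
    (quasiIsoAt_iff_isIso_homologyMap f n).1 inferInstance
  obtain ⟨z, hz⟩ : ∃ z, C.d n (n-1) z = x := by
    cases n with
    | zero => exact ⟨0, by rw [map_zero, hx0 rfl]⟩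
    | succ n => exact mono_elt f n inferInstance x (hx _) y hy
  obtain ⟨z', w, hz', hw⟩ := epi_elt f n inferInstance (y - f.f n z) (by
    rw [map_sub, ← hy, ← hz, f_d_apply, sub_self])
  refine ⟨z + z', -w, by rw [map_add, hz, hz', add_zero], ?_⟩
  rw [map_add, map_neg, ← sub_eq_add_neg, eq_sub_iff_add_eq, add_assoc, ← hw]
  abel

lemma quasiIso_of_coneAcyc {S : Type} [CommRing S] {C C' : ChainComplex (ModuleCat.{0} S) ℕ}
    (f : C ⟶ C') (hf : ConeAcyc f) : QuasiIso f := by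
  refine ⟨fun n => ?_⟩
  rw [quasiIsoAt_iff_isIso_homologyMap]
  have h1 : Mono (HomologicalComplex.homologyMap f n) := by
    rw [HomologicalComplex.mono_homologyMap_iff_up_to_refinements f (n+1) n (n-1) (by simp)
      (downNat_next n)]
    intro A x hx y hy
    have key : ∀ a : A, ∃ z : C.X (n+1), C.d (n+1) n z = x a := by
      intro a
      have hxa : C.d n (n-1) (x a) = 0 := by
        rw [← ConcreteCategory.comp_apply, hx]; rfl
      obtain ⟨z, w, hz, -⟩ := hf (n+1) (x a) (y a) (by simp)
        (fun k => by
          by_cases hk : k + 1 = n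
          · obtain rfl : k = n - 1 := by omega
            exact hxa
          · have : C.d n k = 0 := down_d_zero C hk
            change C.d n k (x a) = 0
            rw [this]; rfl)
        (by
          change f.f n (x a) = C'.d (n+1) n (y a)
          rw [← ConcreteCategory.comp_apply, hy]; rfl)
      exact ⟨z, hz⟩
    choose z hz using key
    refine ⟨ModuleCat.of S (A →₀ S), ModuleCat.ofHom (Finsupp.linearCombination S id), ?_,
      ModuleCat.ofHom (Finsupp.linearCombination S z), ?_⟩
    · rw [ModuleCat.epi_iff_surjective]
      intro a
      exact ⟨Finsupp.single a 1, by simp⟩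
    · ext a
      simp [hz]
  have h2 : Epi (HomologicalComplex.homologyMap f n) := by
    rw [HomologicalComplex.epi_homologyMap_iff_up_to_refinements f (n+1) n (n-1) (by simp)
      (downNat_next n)]
    intro A y hy
    have key : ∀ a : A, ∃ (z : C.X n) (w : C'.X (n+1)), C.d n (n-1) z = 0 ∧
        f.f n z = y a + C'.d (n+1) n w := by
      intro a
      refine hf n 0 (y a) (fun _ => rfl) (fun _ => map_zero _) ?_
      rw [map_zero, ← ConcreteCategory.comp_apply, hy]; rfl
    choose z w hz hw using key
    refine ⟨ModuleCat.of S (A →₀ S), ModuleCat.ofHom (Finsupp.linearCombination S id), ?_,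
      ModuleCat.ofHom (Finsupp.linearCombination S z), ?_,
      - ModuleCat.ofHom (Finsupp.linearCombination S w), ?_⟩
    · rw [ModuleCat.epi_iff_surjective]
      intro a
      exact ⟨Finsupp.single a 1, by simp⟩
    · ext a
      simp [hz]
    · ext a
      simp [hw]
  exact isIso_of_mono_of_epi _

section
variable {S : Type} [CommRing S] (C C' D : ChainComplex (ModuleCat S) ℕ)

/-- inclusion -/
noncomputable def tι (i j n : ℕ) (h : i + j = n) : C.X i ⊗ D.X j ⟶ (C ⊗ D).X n :=
  HomologicalComplex.ιTensorObj C D i j n h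

/-- projection or zero -/
noncomputable def tπ (i j n : ℕ) : (C ⊗ D).X n ⟶ C.X i ⊗ D.X j :=
  HomologicalComplex.mapBifunctorDesc (K₁ := C) (K₂ := D) (F := curriedTensor (ModuleCat S))
    (c := ComplexShape.down ℕ) (fun i' j' _ =>
      if h : i' = i ∧ j' = j then eqToHom (by rw [h.1, h.2]; rfl) else 0)

variable {C D} in
lemma t_ext {n : ℕ} {Y : ModuleCat S} {f g : (C ⊗ D).X n ⟶ Y}
    (h : ∀ i j h, tι C D i j n h ≫ f = tι C D i j n h ≫ g) : f = g :=
  HomologicalComplex.mapBifunctor.hom_ext (K₁ := C) (K₂ := D) (F := curriedTensor (ModuleCat S))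
    (c := ComplexShape.down ℕ) h

lemma tι_π_raw (i j n : ℕ) (h : i + j = n) (i' j' : ℕ) : tι C D i j n h ≫ tπ C D i' j' n =
    if h : i = i' ∧ j = j' then eqToHom (by rw [h.1, h.2]) else 0 :=
  HomologicalComplex.ι_mapBifunctorDesc (K₁ := C) (K₂ := D) (F := curriedTensor (ModuleCat S))
    (c := ComplexShape.down ℕ) _ i j h

lemma tι_π_self (i j n : ℕ) (h : i + j = n) : tι C D i j n h ≫ tπ C D i j n = 𝟙 _ := by
  rw [tι_π_raw, dif_pos ⟨rfl, rfl⟩]; rfl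

lemma tι_π_ne (i j n : ℕ) (h : i + j = n) (i' j' : ℕ) (h' : ¬ (i = i' ∧ j = j')) :
    tι C D i j n h ≫ tπ C D i' j' n = 0 := by
  rw [tι_π_raw, dif_neg h']

lemma tπ_zero (i j n : ℕ) (h : i + j ≠ n) : tπ C D i j n = 0 := by
  apply t_ext
  intro i' j' h'
  rw [tι_π_ne _ _ _ _ _ _ _ _ (by omega), comp_zero]

lemma sum_π_ι (n : ℕ) : 𝟙 ((C ⊗ D).X n) =
    ∑ p : Finset.HasAntidiagonal.antidiagonal n,
      tπ C D p.1.1 p.1.2 n ≫ tι C D p.1.1 p.1.2 n (Finset.HasAntidiagonal.mem_antidiagonal.1 p.2) := by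
  apply t_ext
  intro i j h
  rw [Preadditive.comp_sum, Finset.sum_eq_single ⟨(i, j), Finset.HasAntidiagonal.mem_antidiagonal.2 h⟩]
  · rw [← Category.assoc, tι_π_self, Category.comp_id, Category.id_comp]
  · rintro ⟨⟨a, b⟩, hp⟩ - hne
    rw [← Category.assoc, tι_π_ne, zero_comp]
    rintro ⟨rfl, rfl⟩
    exact hne rfl
  · simp

lemma eq_zero_of_tπ (n : ℕ) (x : (C ⊗ D).X n) (h : ∀ i j, tπ C D i j n x = 0) : x = 0 := by
  have := congrArg (fun g => g.hom x) (sum_π_ι C D n)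
  simp only [ModuleCat.hom_id, LinearMap.id_apply] at this
  rw [this, ModuleCat.hom_sum, LinearMap.sum_apply]
  apply Finset.sum_eq_zero
  intro p _
  rw [ModuleCat.comp_apply, h, map_zero]

lemma tι_d (i j n m : ℕ) (h : i + j = n) (hm : m + 1 = n) (i' j' : ℕ) :
    tι C D i j n h ≫ (C ⊗ D).d n m ≫ tπ C D i' j' m =
    (if h : i = i' + 1 ∧ j = j' then eqToHom (by rw [h.1, h.2]) ≫ C.d (i' + 1) i' ▷ D.X j' else 0) +
    (ComplexShape.down ℕ).ε i' •
    (if h : i = i' ∧ j = j' + 1 then eqToHom (by rw [h.1, h.2]) ≫ C.X i' ◁ D.d (j'+1) j' else 0) := by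
  have e : (C ⊗ D).d n m = HomologicalComplex.mapBifunctor.D₁ C D (curriedTensor (ModuleCat S))
    (ComplexShape.down ℕ) n m + HomologicalComplex.mapBifunctor.D₂ C D (curriedTensor (ModuleCat S))
    (ComplexShape.down ℕ) n m := rfl
  rw [e, Preadditive.add_comp, Preadditive.comp_add]
  congr 1
  · rw [← Category.assoc]
    erw [HomologicalComplex.mapBifunctor.ι_D₁]
    cases i with
    | zero =>
      rw [HomologicalComplex.mapBifunctor.d₁_eq_zero _ _ _ _ _ _ _ (by simp)]
      simp
    | succ i =>
      rw [HomologicalComplex.mapBifunctor.d₁_eq C D _ _ (i₁' := i) (by simp) _ _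
        (by change i + j = m; omega)]
      change ((1 : ℤˣ) • (C.d (i+1) i ▷ D.X j ≫ tι C D i j m _)) ≫ _ = _
      rw [one_smul, Category.assoc, tι_π_raw]
      by_cases hh : i = i' ∧ j = j'
      · obtain ⟨rfl, rfl⟩ := hh
        simp
      · rw [dif_neg hh, dif_neg (by omega), comp_zero]
  · rw [← Category.assoc]
    erw [HomologicalComplex.mapBifunctor.ι_D₂]
    cases j with
    | zero =>
      rw [HomologicalComplex.mapBifunctor.d₂_eq_zero _ _ _ _ _ _ _ (by simp)]
      simp
    | succ j =>
      rw [HomologicalComplex.mapBifunctor.d₂_eq C D _ _ _ (i₂' := j) (by simp) _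
        (by change i + j = m; omega)]
      change ((ComplexShape.down ℕ).ε i • (C.X i ◁ D.d (j+1) j ≫ tι C D i j m _)) ≫ _ = _
      rw [Linear.units_smul_comp, Category.assoc, tι_π_raw]
      by_cases hh : i = i' ∧ j = j'
      · obtain ⟨rfl, rfl⟩ := hh
        simp
      · rw [dif_neg hh, dif_neg (by omega), comp_zero, smul_zero, smul_zero]

lemma d_tπ (n m : ℕ) (hm : m + 1 = n) (i j : ℕ) :
    (C ⊗ D).d n m ≫ tπ C D i j m = tπ C D (i+1) j n ≫ C.d (i+1) i ▷ D.X j +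
      (ComplexShape.down ℕ).ε i • (tπ C D i (j+1) n ≫ C.X i ◁ D.d (j+1) j) := by
  apply t_ext
  intro i' j' h
  rw [tι_d _ _ _ _ _ _ h hm, Preadditive.comp_add, Linear.comp_units_smul, ← Category.assoc,
    ← Category.assoc, tι_π_raw, tι_π_raw]
  congr 1
  · split_ifs <;> simp
  · split_ifs <;> simp

/-- The consequence of `d_tπ` on elements whose next column vanishes -/
lemma d_tπ_apply (n m : ℕ) (hm : m + 1 = n) (i j : ℕ) (x : (C ⊗ D).X n)
    (hx : tπ C D i (j+1) n x = 0) :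
    tπ C D i j m ((C ⊗ D).d n m x) = (C.d (i+1) i ▷ D.X j) (tπ C D (i+1) j n x) := by
  have := congrArg (fun g => g.hom x) (d_tπ C D n m hm i j)
  simp only [ModuleCat.hom_add, LinearMap.add_apply, ModuleCat.comp_apply] at this
  rw [this, add_eq_left]
  obtain h | h := Int.units_eq_one_or ((ComplexShape.down ℕ).ε i)
  · rw [h, one_smul, ModuleCat.comp_apply, hx, map_zero]
  · rw [h, Units.neg_smul, one_smul, ModuleCat.hom_neg, LinearMap.neg_apply,
      ModuleCat.comp_apply, hx, map_zero, neg_zero]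

variable {C C'} in
lemma f_tπ (f : C ⟶ C') (i j n : ℕ) :
    (f ⊗ₘ 𝟙 D).f n ≫ tπ C' D i j n = tπ C D i j n ≫ f.f i ▷ D.X j := by
  apply t_ext
  intro i' j' h
  have : tι C D i' j' n h ≫ (f ⊗ₘ 𝟙 D).f n = f.f i' ▷ D.X j' ≫ tι C' D i' j' n h := by
    refine (HomologicalComplex.ι_mapBifunctorMap f (𝟙 D) (curriedTensor (ModuleCat S))
      (ComplexShape.down ℕ) i' j' n h).trans ?_
    simp [tι]
  rw [← Category.assoc, this, Category.assoc, tι_π_raw, ← Category.assoc, tι_π_raw]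
  by_cases hh : i' = i ∧ j' = j
  · obtain ⟨rfl, rfl⟩ := hh
    simp
  · rw [dif_neg hh, dif_neg hh, comp_zero, zero_comp]

variable {C C'} in
lemma f_tπ_apply (f : C ⟶ C') (i j n : ℕ) (x : (C ⊗ D).X n) :
    tπ C' D i j n ((f ⊗ₘ 𝟙 D).f n x) = (f.f i ▷ D.X j) (tπ C D i j n x) := by
  rw [← ModuleCat.comp_apply, f_tπ, ModuleCat.comp_apply]

end

lemma whisker_acyc {S : Type} [CommRing S] {C C' : ChainComplex (ModuleCat.{0} S) ℕ} (f : C ⟶ C')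
    (hf : QuasiIso f) (M : ModuleCat.{0} S) (hM : Module.Projective S M)
    (n : ℕ) (x : (C.X (n - 1) ⊗ M : ModuleCat S)) (y : (C'.X n ⊗ M : ModuleCat S))
    (h0 : n = 0 → x = 0)
    (hx : ∀ k, (C.d (n - 1) k ▷ M) x = 0)
    (hy : (f.f (n - 1) ▷ M) x = (C'.d n (n - 1) ▷ M) y) :
    ∃ (z : (C.X n ⊗ M : ModuleCat S)) (w : (C'.X (n + 1) ⊗ M : ModuleCat S)),
      (C.d n (n - 1) ▷ M) z = x ∧ (f.f n ▷ M) z = y + (C'.d (n + 1) n ▷ M) w := by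
  have : Module.Flat S M := inferInstance
  have : PreservesColimits (tensorRight M) :=
    preservesColimits_of_natIso (BraidedCategory.tensorLeftIsoTensorRight M)
  have : (tensorRight M).PreservesHomology := inferInstance
  have := coneAcyc_of_quasiIso
    (((tensorRight M).mapHomologicalComplex (ComplexShape.down ℕ)).map f) inferInstance
  exact this n x y h0 hx hy

lemma coneAcyc_tensor {S : Type} [CommRing S] {C C' D : ChainComplex (ModuleCat.{0} S) ℕ}
    (f : C ⟶ C') (hf : QuasiIso f) (hproj : ∀ n : ℕ, Module.Projective S (D.X n)) :
    ConeAcyc (f ⊗ₘ 𝟙 D) := by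
  intro n
  suffices H : ∀ (k : ℕ) (x : (C ⊗ D).X (n - 1)) (y : (C' ⊗ D).X n), (n = 0 → x = 0) →
      (∀ k, (C ⊗ D).d (n - 1) k x = 0) →
      (f ⊗ₘ 𝟙 D).f (n - 1) x = (C' ⊗ D).d n (n - 1) y →
      (∀ i j, k ≤ j → tπ C D i j (n-1) x = 0) → (∀ i j, k ≤ j → tπ C' D i j n y = 0) →
      ∃ (z : (C ⊗ D).X n) (w : (C' ⊗ D).X (n + 1)), (C ⊗ D).d n (n - 1) z = x ∧
        (f ⊗ₘ 𝟙 D).f n z = y + (C' ⊗ D).d (n + 1) n w by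
    intro x y h0 hx hy
    refine H (n+1) x y h0 hx hy (fun i j hj => ?_) (fun i j hj => ?_)
    · rw [tπ_zero _ _ _ _ _ (by omega)]; rfl
    · rw [tπ_zero _ _ _ _ _ (by omega)]; rfl
  intro k
  induction k with
  | zero =>
    intro x y h0 hx hy hx' hy'
    obtain rfl := eq_zero_of_tπ _ _ _ x (fun i j => hx' i j (Nat.zero_le _))
    obtain rfl := eq_zero_of_tπ _ _ _ y (fun i j => hy' i j (Nat.zero_le _))
    exact ⟨0, 0, by simp, by simp⟩
  | succ k ih =>
    intro x y h0 hx hy hx' hy'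
    by_cases hkn : n < k
    · refine ih x y h0 hx hy (fun i j hj => ?_) (fun i j hj => ?_)
      · rw [tπ_zero _ _ _ _ _ (by omega)]; rfl
      · rw [tπ_zero _ _ _ _ _ (by omega)]; rfl
    obtain ⟨i, hi⟩ : ∃ i, i + k = n := ⟨n - k, by omega⟩
    obtain ⟨z, w, hz, hw⟩ := whisker_acyc f hf (D.X k) (hproj k) i
      (tπ C D (i-1) k (n-1) x) (tπ C' D i k n y)
      (by
        rintro rfl
        by_cases hn : n = 0
        · rw [h0 hn, map_zero]
        · rw [tπ_zero _ _ _ _ _ (by omega)]; rfl)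
      (by
        intro l
        by_cases hl : l + 1 = i - 1
        · have h1 := d_tπ_apply C D (n-1) (n-2) (by omega) l k x (hx' _ _ le_rfl)
          rw [hx, map_zero] at h1
          rw [← hl]
          exact h1.symm
        · rw [down_d_zero C hl, MonoidalPreadditive.zero_whiskerRight]; rfl)
      (by
        rw [← f_tπ_apply, hy]
        by_cases h : i = 0
        · subst h
          rw [down_d_zero C' (by omega), MonoidalPreadditive.zero_whiskerRight]
          by_cases hn : n = 0
          · rw [down_d_zero (C' ⊗ D) (n := n) (m := n-1) (by omega)]
            exact map_zero _
          · rw [tπ_zero _ _ _ _ _ (by omega)]; rfl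
        · obtain ⟨i, rfl⟩ : ∃ l, i = l + 1 := ⟨i - 1, by omega⟩
          exact d_tπ_apply C' D n (n-1) (by omega) i k y (hy' _ _ le_rfl))
    have hzι : ∀ a b, ¬ (i = a ∧ k = b) → tπ C D a b n (tι C D i k n hi z) = 0 := by
      intro a b hab
      rw [← ModuleCat.comp_apply, tι_π_ne _ _ _ _ _ _ _ _ hab]; rfl
    have hzs : tπ C D i k n (tι C D i k n hi z) = z := by
      rw [← ModuleCat.comp_apply, tι_π_self]; rfl
    have hi' : (i + 1) + k = n + 1 := by omega
    have hwι : ∀ a b, ¬ (i + 1 = a ∧ k = b) →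
        tπ C' D a b (n+1) (tι C' D (i+1) k (n+1) hi' w) = 0 := by
      intro a b hab
      rw [← ModuleCat.comp_apply, tι_π_ne _ _ _ _ _ _ _ _ hab]; rfl
    have hws : tπ C' D (i+1) k (n+1) (tι C' D (i+1) k (n+1) hi' w) = w := by
      rw [← ModuleCat.comp_apply, tι_π_self]; rfl
    generalize tι C D i k n hi z = Z at *
    generalize tι C' D (i+1) k (n+1) hi' w = W at *
    obtain ⟨z', w', hz', hw'⟩ := ih (x - (C ⊗ D).d n (n-1) Z)
      (y - (f ⊗ₘ 𝟙 D).f n Z + (C' ⊗ D).d (n+1) n W)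
      (by
        intro hn
        rw [h0 hn, down_d_zero (C ⊗ D) (n := n) (m := n-1) (by omega)]
        exact sub_zero _)
      (by
        intro l
        rw [map_sub, hx, d_d_apply, sub_zero])
      (by
        rw [map_sub, map_add, map_sub, d_d_apply, add_zero, hy, f_d_apply])
      (by
        intro a b hb
        rw [map_sub]
        by_cases hn : n = 0
        · rw [h0 hn, map_zero, down_d_zero (C ⊗ D) (n := n) (m := n-1) (by omega), zero_sub,
            neg_eq_zero]
          exact map_zero _
        rw [d_tπ_apply C D n (n-1) (by omega) a b Z (hzι _ _ (by omega))]
        by_cases hab : i = a + 1 ∧ k = b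
        · obtain ⟨rfl, rfl⟩ := hab
          rw [hzs]
          exact sub_eq_zero.2 hz.symm
        · rw [hzι _ _ hab, map_zero, sub_zero]
          by_cases hb' : k = b
          · rw [tπ_zero _ _ _ _ _ (by omega)]; rfl
          · exact hx' _ _ (by omega))
      (by
        intro a b hb
        rw [map_add, map_sub, f_tπ_apply,
          d_tπ_apply C' D (n+1) n rfl a b W (hwι _ _ (by omega))]
        by_cases hab : i = a ∧ k = b
        · obtain ⟨rfl, rfl⟩ := hab
          rw [hzs, hws, hw]
          abel
        · rw [hzι _ _ hab, hwι _ _ (by omega), map_zero, map_zero, sub_zero, add_zero]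
          by_cases hb' : k = b
          · rw [tπ_zero _ _ _ _ _ (by omega)]; rfl
          · exact hy' _ _ (by omega))
    refine ⟨z' + Z, w' + W, ?_, ?_⟩
    · rw [map_add, hz']; abel
    · rw [map_add, map_add, hw']; abel

/-- If `f : C ⟶ C'` is a quasi-isomorphism of non-negatively graded chain complexes of
`S`-modules and `D` is a bounded chain complex of projective `S`-modules, then
`f ⊗ 𝟙 D` (the induced map on total complexes of the tensor products) is a
quasi-isomorphism. -/
theorem quasiIso_tensor_id_of_projective_of_bounded
    (S : Type) [CommRing S]
    (C C' D : ChainComplex (ModuleCat S) ℕ) (f : C ⟶ C')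
    (hf : QuasiIso f)
    (hproj : ∀ n : ℕ, Module.Projective S (D.X n))
    (N : ℕ) (hbound : ∀ n : ℕ, N < n → IsZero (D.X n)) :
    QuasiIso (MonoidalCategory.tensorHom f (𝟙 D)) := by
  exact quasiIso_of_coneAcyc _ (coneAcyc_tensor f hf hproj)
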